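/- Let k be a field, d, α, β, γ ≥ 1, and R = k[X,Y,Z]/(X^d - F(Y,Z)) graded by deg X = α, deg Y = β, deg Z = γ, with F ∈ k[Y,Z] homogeneous of degree dα. Let a ≥ 1, write a = dq + r with 0 ≤ r ≤ d-1, and fix b, c ≥ 1. Then for every s ∈ ℤ there is a short exact sequence of graded R-modules 0 → Syz_R(X^{a+d-2r}, Y^b, Z^c)(s - αr) → Syz_R(X^{a-r}, Y^b, Z^c)(s - αr) ⊕ Syz_R(X^{a+d-r}, Y^b, Z^c)(s) → Syz_R(X^a, Y^b, Z^c)(s) → 0, where the first map sends (h₁,h₂,h₃) to ((X^{d-r}h₁, h₂, h₃), (-h₁, -X^r h₂, -X^r h₃)) and the second sends ((f₁,f₂,f₃),(g₁,g₂,g₃)) to (f₁ + X^{d-r}g₁, X^r f₂ + g₂, X^r f₃ + g₃). -/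

import Mathlib

set_option maxHeartbeats 1000000
set_option synthInstance.maxHeartbeats 1000000

/-- The linear map `(a₁,…,aₙ) ↦ Σ aᵢ·gᵢ`; the syzygy module
`Syz_R(g₁,…,gₙ)` is its kernel. -/
noncomputable def syzMap {R : Type*} [CommRing R] {n : ℕ} (g : Fin n → R) :
    (Fin n → R) →ₗ[R] R :=
  ∑ i, (LinearMap.proj i : (Fin n → R) →ₗ[R] R).smulRight (g i)

/-- The diagonal linear map `(v₁,…,vₙ) ↦ (c₁v₁,…,cₙvₙ)`. -/
noncomputable def diagScale {R : Type*} [CommRing R] {n : ℕ} (cv : Fin n → R) :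
    (Fin n → R) →ₗ[R] (Fin n → R) :=
  LinearMap.pi fun j => cv j • (LinearMap.proj j : (Fin n → R) →ₗ[R] R)

/-- `v` is a homogeneous element whose components lie in the graded pieces
`𝒜 e₀, 𝒜 e₁, 𝒜 e₂`. -/
def pieceCond {k R : Type*} [Semiring k] [AddCommMonoid R] [Module k R]
    (𝒜 : ℤ → Submodule k R) (e0 e1 e2 : ℤ) (v : Fin 3 → R) : Prop :=
  v 0 ∈ 𝒜 e0 ∧ v 1 ∈ 𝒜 e1 ∧ v 2 ∈ 𝒜 e2

/-!
Write `s = X^(d-r)` and `t = X^r`. Over any commutative ring, the maps `ψ` and `φ` are compatible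
with syzygies of `(m·s, y, z)`, `(m, y, z)`, `(m·s·t, y, z)` and `(m·t, y, z)`, and
`0 → R³ → R³ × R³ → R³` is exact, since in each coordinate one of the two scaling factors is `1`.

Only the surjectivity of `φ` on syzygies uses the ring `R`, which is free over `A = k[Y,Z]` with
basis `1, X, …, X^(d-1)`. Splitting the coordinates of a syzygy `u` of `(m·t, y, z)` according to
this basis gives a preimage `(f, g)` of `u` for which `∑ fᵢ(m, y, z)ᵢ` is supported in the powers
`X^j`, `j < d - r`, and `∑ gᵢ(m·s·t, y, z)ᵢ` in those with `j < r`. This relies on `m = X^(dq)`,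
`s·t = X^d`, `y` and `z` all lying in `A`. The relation for `u` reads `t·∑ fᵢ(m, y, z)ᵢ +
∑ gᵢ(m·s·t, y, z)ᵢ = 0`, and by freeness both summands vanish.
-/

section SyzMap

variable {R : Type*} [CommRing R] {n : ℕ}

lemma syzMap_apply (g v : Fin n → R) : syzMap g v = ∑ i, v i * g i := by
  simp [syzMap]

lemma diagScale_apply (c v : Fin n → R) (i : Fin n) : diagScale c v i = c i * v i := by
  simp [diagScale]

lemma syzMap_mem_of_forall_mem {A : Type*} [CommRing A] [Algebra A R] {N : Submodule A R}
    {g v : Fin n → R} (hg : ∀ i, g i ∈ (algebraMap A R).range) (hv : ∀ i, v i ∈ N) :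
    syzMap g v ∈ N := by
  rw [syzMap_apply]
  refine N.sum_mem fun i _ ↦ ?_
  obtain ⟨a, ha⟩ := hg i
  rw [← ha, mul_comm, ← Algebra.smul_def]
  exact N.smul_mem a (hv i)

end SyzMap

section SyzygyComplex

variable {R : Type*} [CommRing R]

/-- The map `ψ(h₁,h₂,h₃) = ((s h₁,h₂,h₃), (-h₁,-t h₂,-t h₃))`, which embeds the syzygies of
`(m s, y, z)` into pairs of syzygies of `(m, y, z)` and `(m s t, y, z)`. -/
noncomputable def syzEmbed (s t : R) : (Fin 3 → R) →ₗ[R] (Fin 3 → R) × (Fin 3 → R) :=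
  (diagScale ![s, 1, 1]).prod (diagScale ![-1, -t, -t])

/-- The map `φ((f₁,f₂,f₃),(g₁,g₂,g₃)) = (f₁ + s g₁, t f₂ + g₂, t f₃ + g₃)`, which combines syzygies
of `(m, y, z)` and `(m s t, y, z)` into a syzygy of `(m t, y, z)`. -/
noncomputable def syzGlue (s t : R) : (Fin 3 → R) × (Fin 3 → R) →ₗ[R] (Fin 3 → R) :=
  (diagScale ![1, t, t]).comp (LinearMap.fst R _ _) +
    (diagScale ![s, 1, 1]).comp (LinearMap.snd R _ _)

variable (s t : R)

lemma syzEmbed_apply (v : Fin 3 → R) :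
    syzEmbed s t v = (![s * v 0, v 1, v 2], ![-v 0, -(t * v 1), -(t * v 2)]) := by
  refine Prod.ext (funext fun i ↦ ?_) (funext fun i ↦ ?_) <;>
    fin_cases i <;> simp [syzEmbed, diagScale_apply]

lemma syzGlue_apply (w : (Fin 3 → R) × (Fin 3 → R)) :
    syzGlue s t w = ![w.1 0 + s * w.2 0, t * w.1 1 + w.2 1, t * w.1 2 + w.2 2] := by
  funext i
  fin_cases i <;> simp [syzGlue, diagScale_apply]

lemma syzEmbed_injective : Function.Injective (syzEmbed s t) := by
  intro v v' h
  simp only [syzEmbed_apply, Prod.mk.injEq, Matrix.vecCons_inj, neg_inj] at h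
  funext i
  fin_cases i
  exacts [h.2.1, h.1.2.1, h.1.2.2.1]

lemma exact_syzEmbed_syzGlue : Function.Exact (syzEmbed s t) (syzGlue s t) := by
  intro w
  constructor
  · intro hw
    simp only [syzGlue_apply, Matrix.cons_eq_zero_iff] at hw
    obtain ⟨h₀, h₁, h₂, -⟩ := hw
    refine ⟨![-w.2 0, w.1 1, w.1 2], Prod.ext (funext fun i ↦ ?_) (funext fun i ↦ ?_)⟩ <;>
      fin_cases i <;>
      simp [syzEmbed_apply, eq_neg_of_add_eq_zero_left h₀, eq_neg_of_add_eq_zero_right h₁,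
        eq_neg_of_add_eq_zero_right h₂]
  · rintro ⟨v, rfl⟩
    simp [syzEmbed_apply, syzGlue_apply]

variable (m y z : R)

lemma syzMap_syzEmbed_fst (v : Fin 3 → R) :
    syzMap ![m, y, z] (syzEmbed s t v).1 = syzMap ![m * s, y, z] v := by
  simp only [syzMap_apply, syzEmbed_apply, Fin.sum_univ_three, Matrix.cons_val]
  ring

lemma syzMap_syzEmbed_snd (v : Fin 3 → R) :
    syzMap ![m * (s * t), y, z] (syzEmbed s t v).2 = -(t * syzMap ![m * s, y, z] v) := by
  simp only [syzMap_apply, syzEmbed_apply, Fin.sum_univ_three, Matrix.cons_val]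
  ring

lemma syzMap_syzGlue (w : (Fin 3 → R) × (Fin 3 → R)) :
    syzMap ![m * t, y, z] (syzGlue s t w) =
      syzMap ![m * (s * t), y, z] w.2 + t * syzMap ![m, y, z] w.1 := by
  simp only [syzMap_apply, syzGlue_apply, Fin.sum_univ_three, Matrix.cons_val]
  ring

variable {s t m y z}

lemma syzEmbed_mem_prod_ker {v : Fin 3 → R} (hv : v ∈ LinearMap.ker (syzMap ![m * s, y, z])) :
    syzEmbed s t v ∈ (LinearMap.ker (syzMap ![m, y, z])).prod
      (LinearMap.ker (syzMap ![m * (s * t), y, z])) := by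
  rw [LinearMap.mem_ker] at hv
  simp [Submodule.mem_prod, syzMap_syzEmbed_fst, syzMap_syzEmbed_snd, hv]

lemma syzGlue_mem_ker {w : (Fin 3 → R) × (Fin 3 → R)}
    (hw : w ∈ (LinearMap.ker (syzMap ![m, y, z])).prod
      (LinearMap.ker (syzMap ![m * (s * t), y, z]))) :
    syzGlue s t w ∈ LinearMap.ker (syzMap ![m * t, y, z]) := by
  simp only [Submodule.mem_prod, LinearMap.mem_ker] at hw
  simp [syzMap_syzGlue, hw]

lemma syzGlue_eq_zero_iff {w : (Fin 3 → R) × (Fin 3 → R)}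
    (hw : w.1 ∈ LinearMap.ker (syzMap ![m, y, z])) :
    syzGlue s t w = 0 ↔ ∃ v ∈ LinearMap.ker (syzMap ![m * s, y, z]), syzEmbed s t v = w := by
  rw [exact_syzEmbed_syzGlue s t w]
  constructor
  · rintro ⟨v, rfl⟩
    exact ⟨v, by rwa [LinearMap.mem_ker, syzMap_syzEmbed_fst] at hw, rfl⟩
  · rintro ⟨v, -, rfl⟩
    exact ⟨v, rfl⟩

end SyzygyComplex

section PowerSpan

variable {A S : Type*} [CommRing A] [CommRing S] [Algebra A S] {x : S} {n m : ℕ}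

variable (A x n) in
/-- The `A`-submodule `A + A x + ⋯ + A x^(n-1)` of values at `x` of polynomials of degree `< n`. -/
def powerSpan : Submodule A S :=
  Submodule.span A (Set.range fun i : Fin n ↦ x ^ (i : ℕ))

variable (A x n m) in
lemma powerSpan_add :
    powerSpan A x (n + m) =
      powerSpan A x n ⊔ (powerSpan A x m).map (LinearMap.mulLeft A (x ^ n)) := by
  rw [powerSpan, powerSpan, powerSpan, Submodule.map_span, ← Submodule.span_union,
    ← Set.range_comp, ← finSumFinEquiv.surjective.range_comp, Sum.range_eq]
  congr 3
  funext i
  simp [pow_add]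

lemma disjoint_powerSpan_map_mulLeft_pow
    (hx : LinearIndependent A fun i : Fin (n + m) ↦ x ^ (i : ℕ)) :
    Disjoint (powerSpan A x n) ((powerSpan A x m).map (LinearMap.mulLeft A (x ^ n))) := by
  have hinr : ((fun i : Fin (n + m) ↦ x ^ (i : ℕ)) ∘ finSumFinEquiv) ∘ Sum.inr =
      LinearMap.mulLeft A (x ^ n) ∘ fun i : Fin m ↦ x ^ (i : ℕ) := by
    funext i
    simp [pow_add]
  have hsum := linearIndependent_sum.1 (hx.comp finSumFinEquiv finSumFinEquiv.injective)
  rw [hinr, Set.range_comp (LinearMap.mulLeft A (x ^ n)), ← Submodule.map_span] at hsum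
  exact hsum.2.2

lemma disjoint_powerSpan_ker_mulLeft_pow
    (hx : LinearIndependent A fun i : Fin (n + m) ↦ x ^ (i : ℕ)) :
    Disjoint (powerSpan A x m) (LinearMap.ker (LinearMap.mulLeft A (x ^ n))) := by
  refine Submodule.range_ker_disjoint ?_
  simpa [Function.comp_def, pow_add] using hx.comp (Fin.natAdd n) (Fin.natAdd_injective m n)

lemma eq_zero_of_add_pow_mul_eq_zero
    (hx : LinearIndependent A fun i : Fin (n + m) ↦ x ^ (i : ℕ)) {p q : S}
    (hp : p ∈ powerSpan A x n) (hq : q ∈ powerSpan A x m) (h : p + x ^ n * q = 0) :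
    p = 0 ∧ q = 0 := by
  have hp₀ : p = 0 := by
    refine Submodule.disjoint_def.1 (disjoint_powerSpan_map_mulLeft_pow hx) p hp ?_
    rw [eq_neg_of_add_eq_zero_left h]
    exact Submodule.neg_mem _ (Submodule.mem_map_of_mem hq)
  refine ⟨hp₀, Submodule.disjoint_def.1 (disjoint_powerSpan_ker_mulLeft_pow hx) q hq ?_⟩
  rwa [hp₀, zero_add] at h

lemma exists_eq_add_pow_mul {u : S} (hu : u ∈ powerSpan A x (n + m)) :
    ∃ p ∈ powerSpan A x n, ∃ q ∈ powerSpan A x m, p + x ^ n * q = u := by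
  obtain ⟨p, hp, _, ⟨q, hq, rfl⟩, rfl⟩ := Submodule.mem_sup.1 (powerSpan_add A x n m ▸ hu)
  exact ⟨p, hp, q, hq, rfl⟩

end PowerSpan

section Surjectivity

variable {A S : Type*} [CommRing A] [CommRing S] [Algebra A S] {x : S} {r p : ℕ}

lemma exists_powerSpan_syzGlue_eq {u : Fin 3 → S} (hu : ∀ i, u i ∈ powerSpan A x (r + p)) :
    ∃ w : (Fin 3 → S) × (Fin 3 → S), (∀ i, w.1 i ∈ powerSpan A x p) ∧
      (∀ i, w.2 i ∈ powerSpan A x r) ∧ syzGlue (x ^ p) (x ^ r) w = u := by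
  obtain ⟨f₀, hf₀, g₀, hg₀, h₀⟩ := exists_eq_add_pow_mul (add_comm r p ▸ hu 0)
  obtain ⟨g₁, hg₁, f₁, hf₁, h₁⟩ := exists_eq_add_pow_mul (hu 1)
  obtain ⟨g₂, hg₂, f₂, hf₂, h₂⟩ := exists_eq_add_pow_mul (hu 2)
  refine ⟨(![f₀, f₁, f₂], ![g₀, g₁, g₂]), ?_, ?_, ?_⟩
  · simp [Fin.forall_fin_succ, hf₀, hf₁, hf₂]
  · simp [Fin.forall_fin_succ, hg₀, hg₁, hg₂]
  · rw [syzGlue_apply]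
    funext i
    fin_cases i
    exacts [h₀, (add_comm _ _).trans h₁, (add_comm _ _).trans h₂]

lemma exists_mem_ker_syzGlue_eq (hspan : powerSpan A x (r + p) = ⊤)
    (hind : LinearIndependent A fun i : Fin (r + p) ↦ x ^ (i : ℕ))
    (hpow : x ^ p * x ^ r ∈ (algebraMap A S).range) {m y z : S}
    (hm : m ∈ (algebraMap A S).range) (hy : y ∈ (algebraMap A S).range)
    (hz : z ∈ (algebraMap A S).range) {u : Fin 3 → S}
    (hu : u ∈ LinearMap.ker (syzMap ![m * x ^ r, y, z])) :
    ∃ w ∈ (LinearMap.ker (syzMap ![m, y, z])).prod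
      (LinearMap.ker (syzMap ![m * (x ^ p * x ^ r), y, z])), syzGlue (x ^ p) (x ^ r) w = u := by
  have htop (i : Fin 3) : u i ∈ powerSpan A x (r + p) := hspan ▸ Submodule.mem_top
  obtain ⟨w, hw₁, hw₂, rfl⟩ := exists_powerSpan_syzGlue_eq htop
  rw [LinearMap.mem_ker, syzMap_syzGlue] at hu
  have hlow : syzMap ![m * (x ^ p * x ^ r), y, z] w.2 ∈ powerSpan A x r :=
    syzMap_mem_of_forall_mem (by simp [-RingHom.mem_range, Fin.forall_fin_succ, mul_mem, *]) hw₂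
  have hhigh : syzMap ![m, y, z] w.1 ∈ powerSpan A x p :=
    syzMap_mem_of_forall_mem (by simp [-RingHom.mem_range, Fin.forall_fin_succ, *]) hw₁
  obtain ⟨h₂, h₁⟩ := eq_zero_of_add_pow_mul_eq_zero hind hlow hhigh hu
  exact ⟨w, ⟨h₁, h₂⟩, rfl⟩

end Surjectivity

section Grading

variable {k R : Type*} [Ring k] [CommRing R] [Module k R] {𝒜 : ℤ → Submodule k R}
  {e₀ e₁ e₂ δ₀ δ₁ δ₂ : ℤ} {v w : Fin 3 → R}

lemma pieceCond_add (hv : pieceCond 𝒜 e₀ e₁ e₂ v) (hw : pieceCond 𝒜 e₀ e₁ e₂ w) :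
    pieceCond 𝒜 e₀ e₁ e₂ (v + w) :=
  ⟨add_mem hv.1 hw.1, add_mem hv.2.1 hw.2.1, add_mem hv.2.2 hw.2.2⟩

variable [SetLike.GradedMonoid 𝒜]

lemma pieceCond_diagScale {c : Fin 3 → R} (hc : pieceCond 𝒜 δ₀ δ₁ δ₂ c)
    (hv : pieceCond 𝒜 e₀ e₁ e₂ v) :
    pieceCond 𝒜 (δ₀ + e₀) (δ₁ + e₁) (δ₂ + e₂) (diagScale c v) := by
  simp only [pieceCond, diagScale_apply]
  exact ⟨SetLike.mul_mem_graded hc.1 hv.1, SetLike.mul_mem_graded hc.2.1 hv.2.1,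
    SetLike.mul_mem_graded hc.2.2 hv.2.2⟩

variable {s t : R} {σ τ : ℤ}

lemma pieceCond_syzEmbed (hs : s ∈ 𝒜 σ) (ht : t ∈ 𝒜 τ) (hv : pieceCond 𝒜 e₀ e₁ e₂ v) :
    pieceCond 𝒜 (σ + e₀) e₁ e₂ (syzEmbed s t v).1 ∧
      pieceCond 𝒜 e₀ (τ + e₁) (τ + e₂) (syzEmbed s t v).2 := by
  have hone : (1 : R) ∈ 𝒜 0 := SetLike.GradedOne.one_mem
  have hfst : pieceCond 𝒜 σ 0 0 ![s, 1, 1] := ⟨hs, hone, hone⟩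
  have hsnd : pieceCond 𝒜 0 τ τ ![-1, -t, -t] := ⟨neg_mem hone, neg_mem ht, neg_mem ht⟩
  constructor
  · simpa only [zero_add] using! pieceCond_diagScale hfst hv
  · simpa only [zero_add] using! pieceCond_diagScale hsnd hv

lemma pieceCond_syzGlue (hs : s ∈ 𝒜 σ) (ht : t ∈ 𝒜 τ)
    (hv : pieceCond 𝒜 e₀ (e₁ - τ) (e₂ - τ) v) (hw : pieceCond 𝒜 (e₀ - σ) e₁ e₂ w) :
    pieceCond 𝒜 e₀ e₁ e₂ (syzGlue s t (v, w)) := by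
  have hone : (1 : R) ∈ 𝒜 0 := SetLike.GradedOne.one_mem
  have hfst : pieceCond 𝒜 0 τ τ ![1, t, t] := ⟨hone, ht, ht⟩
  have hsnd : pieceCond 𝒜 σ 0 0 ![s, 1, 1] := ⟨hs, hone, hone⟩
  refine pieceCond_add ?_ ?_
  · simpa only [zero_add, add_sub_cancel] using! pieceCond_diagScale hfst hv
  · simpa only [zero_add, add_sub_cancel] using! pieceCond_diagScale hsnd hw

end Grading

section Hypersurface

open Polynomial

section IsAdjoinRootMonic

variable {A S : Type*} [CommRing A] [CommRing S] [Algebra A S] {g : A[X]}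

lemma linearIndependent_root_pow (h : IsAdjoinRootMonic S g) :
    LinearIndependent A fun i : Fin g.natDegree ↦ h.root ^ (i : ℕ) := by
  simpa only [← h.basis_apply] using h.basis.linearIndependent

lemma powerSpan_root_eq_top (h : IsAdjoinRootMonic S g) :
    powerSpan A h.root g.natDegree = ⊤ := by
  simpa only [powerSpan, ← h.basis_apply] using h.basis.span_eq

end IsAdjoinRootMonic

lemma bijective_aeval_X_supported {σ k : Type*} [CommRing k] {s : Set σ} {i : σ} (hi : i ∉ s)
    (hs : insert i s = Set.univ) :
    Function.Bijective
      (aeval (MvPolynomial.X i) : (MvPolynomial.supported k s)[X] →ₐ[_] MvPolynomial σ k) := by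
  refine ⟨transcendental_iff_injective.1 (MvPolynomial.transcendental_supported_X k hi),
    fun p ↦ ?_⟩
  induction p using MvPolynomial.induction_on with
  | C a => exact ⟨C (algebraMap k _ a), by rw [aeval_C]; rfl⟩
  | add p p' hp hp' =>
    obtain ⟨g, rfl⟩ := hp
    obtain ⟨g', rfl⟩ := hp'
    exact ⟨g + g', map_add _ g g'⟩
  | mul_X p j hp =>
    obtain ⟨g, rfl⟩ := hp
    rcases (hs ▸ Set.mem_univ j : j ∈ insert i s) with rfl | hj
    · exact ⟨g * X, by simp⟩
    · refine ⟨g * C ⟨MvPolynomial.X j, Algebra.subset_adjoin ⟨j, hj, rfl⟩⟩, ?_⟩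
      rw [map_mul, aeval_C]
      rfl

/-- If `B = A[b]` is a polynomial ring in `b`, then `B ⧸ (g(b))` arises from `A` by adjoining a
root of `g`, namely the class of `b`. The generator `G = g(b)` is a separate argument so that it can
be given in any form. -/
noncomputable def isAdjoinRootQuotient {A B : Type*} [CommRing A] [CommRing B] [Algebra A B] {b : B}
    (hb : Function.Bijective (aeval b : A[X] →ₐ[A] B)) {g : A[X]} {G : B} (hG : aeval b g = G) :
    IsAdjoinRoot (B ⧸ Ideal.span {G}) g where
  map := (Ideal.Quotient.mkₐ A _).comp (aeval b)
  map_surjective := Ideal.Quotient.mk_surjective.comp hb.surjective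
  ker_map := by
    ext p
    rw [RingHom.mem_ker, AlgHom.comp_apply, Ideal.Quotient.mkₐ_eq_mk,
      Ideal.Quotient.eq_zero_iff_mem, Ideal.mem_span_singleton, Ideal.mem_span_singleton, ← hG]
    exact map_dvd_iff (AlgEquiv.ofBijective (aeval b) hb)

section Supported

variable {σ k : Type*} [CommRing k] {s : Set σ} {p : MvPolynomial σ k}

/-- `k[X_j | j ∈ σ] ⧸ (X_i ^ d - F)`, where `F` does not involve `X_i`, arises from the ring of
polynomials in the remaining variables by adjoining a root of `X ^ d - F`. -/
noncomputable def isAdjoinRootSupported {i : σ} (hi : i ∉ s) (hs : insert i s = Set.univ)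
    (hp : p ∈ MvPolynomial.supported k s) (d : ℕ) :
    IsAdjoinRoot (MvPolynomial σ k ⧸ Ideal.span {MvPolynomial.X i ^ d - p})
      (X ^ d - C (⟨p, hp⟩ : MvPolynomial.supported k s)) :=
  isAdjoinRootQuotient (A := MvPolynomial.supported k s)
    (bijective_aeval_X_supported hi hs) (by simp)

lemma isAdjoinRootSupported_root {i : σ} (hi : i ∉ s) (hs : insert i s = Set.univ)
    (hp : p ∈ MvPolynomial.supported k s) (d : ℕ) :
    (isAdjoinRootSupported hi hs hp d).root = Ideal.Quotient.mk _ (MvPolynomial.X i) := by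
  simp [isAdjoinRootSupported, isAdjoinRootQuotient, IsAdjoinRoot.root]

lemma mk_X_pow_mem_range_algebraMap {i : σ} (hi : i ∈ s) (I : Ideal (MvPolynomial σ k)) (n : ℕ) :
    Ideal.Quotient.mk I (MvPolynomial.X i) ^ n ∈
      (algebraMap (MvPolynomial.supported k s) (MvPolynomial σ k ⧸ I)).range := by
  have hX : Ideal.Quotient.mk I (MvPolynomial.X i) ∈
      (algebraMap (MvPolynomial.supported k s) (MvPolynomial σ k ⧸ I)).range :=
    ⟨⟨MvPolynomial.X i, Algebra.subset_adjoin ⟨i, hi, rfl⟩⟩, rfl⟩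
  exact pow_mem hX n

end Supported

end Hypersurface

open Polynomial in
/-- `y` and `z` stand for `Y^b` and `Z^c`, and `β` and `γ` for their degrees. -/
theorem stmt_13_general {k A S : Type*} [Ring k] [CommRing A] [Nontrivial A] [CommRing S]
    [Algebra A S] [Module k S] {d r : ℕ} (q : ℕ) (hr : r < d) {f : A}
    (h : IsAdjoinRoot S (X ^ d - C f)) {x y z : S} (hx : h.root = x)
    (hy : y ∈ (algebraMap A S).range) (hz : z ∈ (algebraMap A S).range)
    (𝒜 : ℤ → Submodule k S) [SetLike.GradedMonoid 𝒜] {α : ℤ} (hα : x ∈ 𝒜 α) (β γ s : ℤ) :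
    let K := fun l : ℕ => LinearMap.ker (syzMap ![x ^ l, y, z])
    let Ψ := syzEmbed (x ^ (d - r)) (x ^ r)
    let Φ := syzGlue (x ^ (d - r)) (x ^ r)
    (∀ v ∈ K (d * q + (d - r)), Ψ v ∈ (K (d * q)).prod (K (d * (q + 1)))) ∧
    (∀ w ∈ (K (d * q)).prod (K (d * (q + 1))), Φ w ∈ K (d * q + r)) ∧
    Function.Injective Ψ ∧
    (∀ w ∈ (K (d * q)).prod (K (d * (q + 1))),
      (Φ w = 0 ↔ ∃ v ∈ K (d * q + (d - r)), Ψ v = w)) ∧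
    (∀ u ∈ K (d * q + r), ∃ w ∈ (K (d * q)).prod (K (d * (q + 1))), Φ w = u) ∧
    (∀ (m : ℤ) (v : Fin 3 → S),
      pieceCond 𝒜 (m + (s - α * r) - α * (d * q + (d - r))) (m + (s - α * r) - β)
        (m + (s - α * r) - γ) v →
      pieceCond 𝒜 (m + (s - α * r) - α * (d * q)) (m + (s - α * r) - β)
        (m + (s - α * r) - γ) (Ψ v).1 ∧
      pieceCond 𝒜 (m + s - α * (d * (q + 1))) (m + s - β) (m + s - γ) (Ψ v).2) ∧
    (∀ (m : ℤ) (w : (Fin 3 → S) × (Fin 3 → S)),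
      pieceCond 𝒜 (m + (s - α * r) - α * (d * q)) (m + (s - α * r) - β)
        (m + (s - α * r) - γ) w.1 →
      pieceCond 𝒜 (m + s - α * (d * (q + 1))) (m + s - β) (m + s - γ) w.2 →
      pieceCond 𝒜 (m + s - α * (d * q + r)) (m + s - β) (m + s - γ) (Φ w)) := by
  obtain ⟨p, rfl⟩ := Nat.exists_eq_add_of_le hr.le
  have hmonic : (X ^ (r + p) - C f).Monic := monic_X_pow_sub_C f (by omega)
  have hind := linearIndependent_root_pow ⟨h, hmonic⟩
  have hspan := powerSpan_root_eq_top ⟨h, hmonic⟩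
  rw [natDegree_X_pow_sub_C, hx] at hind hspan
  have hpow : x ^ (r + p) = algebraMap A S f := by
    rw [← sub_eq_zero]
    simpa only [map_sub, map_pow, aeval_X, aeval_C, hx] using h.aeval_root_self
  have hxs : x ^ p ∈ 𝒜 (p * α) := by simpa using SetLike.pow_mem_graded p hα
  have hxt : x ^ r ∈ 𝒜 (r * α) := by simpa using SetLike.pow_mem_graded r hα
  have hd : x ^ ((r + p) * q) ∈ (algebraMap A S).range := ⟨f ^ q, by rw [map_pow, pow_mul, hpow]⟩
  have hst : x ^ p * x ^ r ∈ (algebraMap A S).range := ⟨f, by rw [← pow_add, add_comm, hpow]⟩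
  have hpq : x ^ ((r + p) * (q + 1)) = x ^ ((r + p) * q) * (x ^ p * x ^ r) := by ring
  simp only [Nat.add_sub_cancel_left, pow_add _ ((r + p) * q), hpq]
  refine ⟨fun v ↦ syzEmbed_mem_prod_ker, fun w ↦ syzGlue_mem_ker, syzEmbed_injective _ _,
    fun w hw ↦ syzGlue_eq_zero_iff hw.1, fun u ↦ exists_mem_ker_syzGlue_eq hspan hind hst hd hy hz,
    fun m v hv ↦ ?_, fun m w hv hw ↦ ?_⟩
  · convert pieceCond_syzEmbed hxs hxt hv using 2 <;> push_cast <;> ring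
  · refine pieceCond_syzGlue hxs hxt ?_ ?_
    · convert hv using 1 <;> ring
    · convert hw using 1
      push_cast
      ring

/-- For `R = k[X,Y,Z]/(X^d - F(Y,Z))`, graded with
`deg X = α, deg Y = β, deg Z = γ` and `F ∈ k[Y,Z]` homogeneous of degree `dα`,
and `a = dq + r` with `0 ≤ r ≤ d - 1`, for every `s ∈ ℤ` there is a short
exact sequence of graded `R`-modules
`0 → Syz(X^{a+d-2r},Y^b,Z^c)(s-αr) →ψ Syz(X^{a-r},Y^b,Z^c)(s-αr) ⊕
Syz(X^{a+d-r},Y^b,Z^c)(s) →φ Syz(X^a,Y^b,Z^c)(s) → 0`, where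
`ψ(h₁,h₂,h₃) = ((X^{d-r}h₁,h₂,h₃), (-h₁,-X^r h₂,-X^r h₃))` and
`φ((f₁,f₂,f₃),(g₁,g₂,g₃)) = (f₁+X^{d-r}g₁, X^r f₂+g₂, X^r f₃+g₃)`. -/
theorem stmt_13 {k : Type*} [Field k] (d q r α β γ b c : ℕ) (hd : 1 ≤ d)
    (hα : 1 ≤ α) (hβ : 1 ≤ β) (hγ : 1 ≤ γ) (hr : r < d) (hb : 1 ≤ b) (hc : 1 ≤ c)
    (F : MvPolynomial (Fin 3) k) (hFsupp : F ∈ MvPolynomial.supported k {1, 2})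
    (hFhom : F.IsWeightedHomogeneous ![α, β, γ] (d * α))
    (𝒜 : ℤ → Submodule k
      (MvPolynomial (Fin 3) k ⧸ Ideal.span {MvPolynomial.X 0 ^ d - F}))
    [GradedAlgebra 𝒜]
    (hX : Ideal.Quotient.mk _ (MvPolynomial.X 0) ∈ 𝒜 (α : ℤ))
    (hY : Ideal.Quotient.mk _ (MvPolynomial.X 1) ∈ 𝒜 (β : ℤ))
    (hZ : Ideal.Quotient.mk _ (MvPolynomial.X 2) ∈ 𝒜 (γ : ℤ))
    (s : ℤ) :
    let R := MvPolynomial (Fin 3) k ⧸ Ideal.span {MvPolynomial.X 0 ^ d - F}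
    let x : R := Ideal.Quotient.mk _ (MvPolynomial.X 0)
    let y : R := Ideal.Quotient.mk _ (MvPolynomial.X 1)
    let z : R := Ideal.Quotient.mk _ (MvPolynomial.X 2)
    -- the four syzygy modules, for `a+d-2r = dq+(d-r)`, `a-r = dq`,
    -- `a+d-r = d(q+1)` and `a = dq+r`
    let K := fun l : ℕ => LinearMap.ker (syzMap ![x ^ l, y ^ b, z ^ c])
    let Ψ : (Fin 3 → R) →ₗ[R] (Fin 3 → R) × (Fin 3 → R) :=
      (diagScale ![x ^ (d - r), 1, 1]).prod (diagScale ![-1, -x ^ r, -x ^ r])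
    let Φ : (Fin 3 → R) × (Fin 3 → R) →ₗ[R] (Fin 3 → R) :=
      (diagScale ![1, x ^ r, x ^ r]).comp (LinearMap.fst R _ _) +
        (diagScale ![x ^ (d - r), 1, 1]).comp (LinearMap.snd R _ _)
    -- `ψ` and `φ` restrict to the syzygy modules …
    (∀ v ∈ K (d * q + (d - r)), Ψ v ∈ (K (d * q)).prod (K (d * (q + 1)))) ∧
    (∀ w ∈ (K (d * q)).prod (K (d * (q + 1))), Φ w ∈ K (d * q + r)) ∧
    -- … giving a short exact sequence: injectivity, exactness, surjectivity
    Function.Injective Ψ ∧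
    (∀ w ∈ (K (d * q)).prod (K (d * (q + 1))),
      (Φ w = 0 ↔ ∃ v ∈ K (d * q + (d - r)), Ψ v = w)) ∧
    (∀ u ∈ K (d * q + r), ∃ w ∈ (K (d * q)).prod (K (d * (q + 1))), Φ w = u) ∧
    -- … and the maps are homogeneous of degree 0 for the stated twists
    (∀ (m : ℤ) (v : Fin 3 → R),
      pieceCond 𝒜 (m + (s - α * r) - α * (d * q + (d - r)))
        (m + (s - α * r) - β * b) (m + (s - α * r) - γ * c) v →
      pieceCond 𝒜 (m + (s - α * r) - α * (d * q)) (m + (s - α * r) - β * b)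
        (m + (s - α * r) - γ * c) (Ψ v).1 ∧
      pieceCond 𝒜 (m + s - α * (d * (q + 1))) (m + s - β * b)
        (m + s - γ * c) (Ψ v).2) ∧
    (∀ (m : ℤ) (w : (Fin 3 → R) × (Fin 3 → R)),
      pieceCond 𝒜 (m + (s - α * r) - α * (d * q)) (m + (s - α * r) - β * b)
        (m + (s - α * r) - γ * c) w.1 →
      pieceCond 𝒜 (m + s - α * (d * (q + 1))) (m + s - β * b)
        (m + s - γ * c) w.2 →
      pieceCond 𝒜 (m + s - α * (d * q + r)) (m + s - β * b)
        (m + s - γ * c) (Φ w)) := by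
  exact stmt_13_general q hr
    (isAdjoinRootSupported (s := {1, 2}) (by simp) (by ext i; fin_cases i <;> simp) hFsupp d)
    (isAdjoinRootSupported_root ..) (mk_X_pow_mem_range_algebraMap (by simp) _ b)
    (mk_X_pow_mem_range_algebraMap (by simp) _ c) 𝒜 hX (β * b) (γ * c) s
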